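/- Let M and H be n×n real symmetric matrices with eigenvalues λ_1 ≥ ⋯ ≥ λ_n for M and λ̃_1 ≥ ⋯ ≥ λ̃_n for M+H, and let ṽ^(1), …, ṽ^(n) be an orthonormal basis of ℝ^n with (M+H) ṽ^(i) = λ̃_i ṽ^(i). Fix s, let Λ_s = { i : λ_i = λ_s }, d_s = |Λ_s|, and δ_s = min_{i ∉ Λ_s} |λ_s − λ_i|. Then there exists an orthonormal family { v^(i) }_{i ∈ Λ_s} of eigenvectors of M with eigenvalue λ_s such that for every i ∈ Λ_s, ⟨ṽ^(i), v^(i)⟩ ≥ 1 − 4 d_s ( ‖H‖ / δ_s )². -/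

import Mathlib

open Matrix

/-- The spectral (operator) norm of a real square matrix. -/
noncomputable def specNorm {n : ℕ} (A : Matrix (Fin n) (Fin n) ℝ) : ℝ :=
  ‖Matrix.toEuclideanCLM (𝕜 := ℝ) A‖

/-- `d_s = |Λ_s|`, the multiplicity of the eigenvalue `λ_s`. -/
noncomputable def eigMult {n : ℕ} (lam : Fin n → ℝ) (s : Fin n) : ℕ :=
  Nat.card {i : Fin n // lam i = lam s}

/-- `δ_s = min_{i ∉ Λ_s} |λ_s - λ_i|`, the gap between `λ_s` and the nearest
distinct eigenvalue. -/
noncomputable def eigGap {n : ℕ} (lam : Fin n → ℝ) (s : Fin n) : ℝ :=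
  sInf {x : ℝ | ∃ i, lam i ≠ lam s ∧ x = |lam s - lam i|}

lemma on_parseval {n : ℕ} (w : Fin n → (Fin n → ℝ))
    (hw : ∀ i j, w i ⬝ᵥ w j = if i = j then (1 : ℝ) else 0) (x y : Fin n → ℝ) :
    x ⬝ᵥ y = ∑ k, (w k ⬝ᵥ x) * (w k ⬝ᵥ y) := by
  have h1 : (Matrix.of w) * (Matrix.of w)ᵀ = 1 := by
    ext i j
    rw [Matrix.mul_apply, Matrix.one_apply, ← hw i j]
    rfl
  have h2 : (Matrix.of w)ᵀ * (Matrix.of w) = 1 := mul_eq_one_comm.mp h1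
  have h3 : ((Matrix.of w) *ᵥ x) ⬝ᵥ ((Matrix.of w) *ᵥ y) = x ⬝ᵥ y := by
    rw [Matrix.dotProduct_mulVec, Matrix.vecMul_mulVec, h2, Matrix.vecMul_one]
  rw [← h3]
  rfl

lemma symm_dot {n : ℕ} (A : Matrix (Fin n) (Fin n) ℝ) (hA : A.IsSymm) (x y : Fin n → ℝ) :
    x ⬝ᵥ (A *ᵥ y) = (A *ᵥ x) ⬝ᵥ y := by
  rw [Matrix.dotProduct_mulVec, ← Matrix.mulVec_transpose, hA.eq]

lemma weyl_aux {n : ℕ} (A B : Matrix (Fin n) (Fin n) ℝ) (hA : A.IsSymm) (hB : B.IsSymm)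
    (a b : Fin n → ℝ) (ha : Antitone a) (hb : Antitone b)
    (w u : Fin n → (Fin n → ℝ))
    (hw : ∀ i j, w i ⬝ᵥ w j = if i = j then (1 : ℝ) else 0)
    (hu : ∀ i j, u i ⬝ᵥ u j = if i = j then (1 : ℝ) else 0)
    (hwe : ∀ i, A *ᵥ (w i) = a i • w i) (hue : ∀ i, B *ᵥ (u i) = b i • u i)
    (h : ℝ) (hh : ∀ x, x ⬝ᵥ (A *ᵥ x) ≤ x ⬝ᵥ (B *ᵥ x) + h * (x ⬝ᵥ x)) (i : Fin n) :
    a i ≤ b i + h := by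
  let N : Matrix (Fin n) (Fin n) ℝ :=
    Matrix.of fun j => if j = i then 0 else if j < i then u j else w j
  have hN : N.det = 0 := Matrix.det_eq_zero_of_row_eq_zero i (by intro j; simp [N])
  obtain ⟨x, hx0, hx⟩ := Matrix.exists_mulVec_eq_zero_iff.mpr hN
  have hxj : ∀ j, (if j = i then 0 else if j < i then u j else w j) ⬝ᵥ x = 0 :=
    fun j => congrFun hx j
  have hpos : 0 < x ⬝ᵥ x := by
    have h1 : x ⬝ᵥ x ≠ 0 := fun h => hx0 (dotProduct_self_eq_zero.mp h)
    have h2 : 0 ≤ x ⬝ᵥ x := Finset.sum_nonneg fun k _ => mul_self_nonneg _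
    exact lt_of_le_of_ne h2 h1.symm
  have h1 : a i * (x ⬝ᵥ x) ≤ x ⬝ᵥ (A *ᵥ x) := by
    rw [on_parseval w hw x x, on_parseval w hw x (A *ᵥ x), Finset.mul_sum]
    refine Finset.sum_le_sum fun k _ => ?_
    rw [symm_dot A hA, hwe, smul_dotProduct, smul_eq_mul]
    rcases le_or_gt k i with hk | hk
    · nlinarith [mul_self_nonneg (w k ⬝ᵥ x), ha hk]
    · have := hxj k
      rw [if_neg hk.ne', if_neg hk.not_gt] at this
      simp [this]
  have h2 : x ⬝ᵥ (B *ᵥ x) ≤ b i * (x ⬝ᵥ x) := by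
    rw [on_parseval u hu x x, on_parseval u hu x (B *ᵥ x), Finset.mul_sum]
    refine Finset.sum_le_sum fun k _ => ?_
    rw [symm_dot B hB, hue, smul_dotProduct, smul_eq_mul]
    rcases lt_or_ge k i with hk | hk
    · have := hxj k
      rw [if_neg hk.ne, if_pos hk] at this
      simp [this]
    · nlinarith [mul_self_nonneg (u k ⬝ᵥ x), hb hk]
  have h3 := hh x
  by_contra! hc
  nlinarith

lemma specNorm_nonneg {n : ℕ} (H : Matrix (Fin n) (Fin n) ℝ) : 0 ≤ specNorm H := norm_nonneg _

lemma specNorm_sq {n : ℕ} (H : Matrix (Fin n) (Fin n) ℝ) (x : Fin n → ℝ) :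
    (H *ᵥ x) ⬝ᵥ (H *ᵥ x) ≤ specNorm H ^ 2 * (x ⬝ᵥ x) := by
  have key : ∀ y : Fin n → ℝ, ‖WithLp.toLp 2 y‖ ^ 2 = y ⬝ᵥ y := by
    intro y
    rw [EuclideanSpace.real_norm_sq_eq]
    simp [dotProduct, pow_two]
  have h1 := (Matrix.toEuclideanCLM (𝕜 := ℝ) H).le_opNorm (WithLp.toLp 2 x)
  have h2 : Matrix.toEuclideanCLM (𝕜 := ℝ) H (WithLp.toLp 2 x) = WithLp.toLp 2 (H *ᵥ x) := by
    simp
  rw [h2] at h1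
  rw [← key, ← key, ← mul_pow]
  exact pow_le_pow_left₀ (norm_nonneg _) h1 2

lemma specNorm_quad {n : ℕ} (H : Matrix (Fin n) (Fin n) ℝ) (x : Fin n → ℝ) :
    |x ⬝ᵥ (H *ᵥ x)| ≤ specNorm H * (x ⬝ᵥ x) := by
  have h2 : 0 ≤ x ⬝ᵥ x := Finset.sum_nonneg fun k _ => mul_self_nonneg _
  apply abs_le_of_sq_le_sq _ (mul_nonneg (specNorm_nonneg H) h2)
  have h3 : (x ⬝ᵥ (H *ᵥ x)) ^ 2 ≤ (x ⬝ᵥ x) * ((H *ᵥ x) ⬝ᵥ (H *ᵥ x)) := by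
    have := Finset.sum_mul_sq_le_sq_mul_sq Finset.univ x (H *ᵥ x)
    simpa [dotProduct, pow_two] using this
  nlinarith [specNorm_sq H x]

lemma weyl {n : ℕ} (M H : Matrix (Fin n) (Fin n) ℝ)
    (hM : M.IsSymm) (hH : H.IsSymm)
    (lam tlam : Fin n → ℝ) (hlam : Antitone lam) (htlam : Antitone tlam)
    (tv w : Fin n → (Fin n → ℝ))
    (htON : ∀ i j, tv i ⬝ᵥ tv j = if i = j then (1 : ℝ) else 0)
    (hteig : ∀ i, (M + H).mulVec (tv i) = tlam i • tv i)
    (hw : ∀ i j, w i ⬝ᵥ w j = if i = j then (1 : ℝ) else 0)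
    (hwe : ∀ i, M.mulVec (w i) = lam i • w i) (i : Fin n) :
    |lam i - tlam i| ≤ specNorm H := by
  have hMH : (M + H).IsSymm := hM.add hH
  have h1 := weyl_aux M (M + H) hM hMH lam tlam hlam htlam w tv hw htON hwe hteig (specNorm H)
    (by
      intro x
      rw [Matrix.add_mulVec, dotProduct_add]
      linarith [(abs_le.mp (specNorm_quad H x)).1]) i
  have h2 := weyl_aux (M + H) M hMH hM tlam lam htlam hlam tv w htON hw hteig hwe (specNorm H)
    (by
      intro x
      rw [Matrix.add_mulVec, dotProduct_add]
      linarith [(abs_le.mp (specNorm_quad H x)).2]) i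
  rw [abs_le]
  constructor <;> linarith

lemma polar_aux {ι : Type*} [Fintype ι] [DecidableEq ι] (A : Matrix ι ι ℝ) 
    (hdet : ∀ c, A *ᵥ c = 0 → c = 0)
    (hle : ∀ c, (A *ᵥ c) ⬝ᵥ (A *ᵥ c) ≤ c ⬝ᵥ c) :
    ∃ Q : Matrix ι ι ℝ, Qᵀ * Q = 1 ∧ ∀ i, (Aᵀ * A) i i ≤ (Qᵀ * A) i i := by
  have hG : (Aᵀ * A).IsHermitian := by
    simpa using Matrix.isHermitian_conjTranspose_mul_self A
  obtain ⟨U, d, hU, hsp⟩ : ∃ (U : Matrix ι ι ℝ) (d : ι → ℝ), U * Uᵀ = 1 ∧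
      Aᵀ * A = U * Matrix.diagonal d * Uᵀ := by
    refine ⟨hG.eigenvectorUnitary, hG.eigenvalues, ?_, ?_⟩
    · have := Unitary.coe_mul_star_self hG.eigenvectorUnitary
      simpa [Matrix.star_eq_conjTranspose] using this
    · have := hG.spectral_theorem
      simpa [Unitary.conjStarAlgAut_apply, Matrix.star_eq_conjTranspose, Function.comp_def] using this
  have hU' : Uᵀ * U = 1 := mul_eq_one_comm.mp hU
  have hd : ∀ k, d k = (A *ᵥ (U *ᵥ Pi.single k 1)) ⬝ᵥ (A *ᵥ (U *ᵥ Pi.single k 1)) := by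
    intro k
    have h1 : (A * U)ᵀ * (A * U) = Matrix.diagonal d := by
      calc (A * U)ᵀ * (A * U) = Uᵀ * (Aᵀ * A) * U := by
            rw [Matrix.transpose_mul]; simp only [Matrix.mul_assoc]
        _ = (Uᵀ * U) * Matrix.diagonal d * (Uᵀ * U) := by
            rw [hsp]; simp only [Matrix.mul_assoc]
        _ = _ := by rw [hU']; simp
    rw [Matrix.mulVec_mulVec, Matrix.dotProduct_mulVec, Matrix.vecMul_mulVec, h1]
    simp
  have hu1 : ∀ k, (U *ᵥ Pi.single k 1) ⬝ᵥ (U *ᵥ Pi.single k 1) = 1 := by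
    intro k
    rw [Matrix.dotProduct_mulVec, Matrix.vecMul_mulVec, hU']
    simp
  have hd1 : ∀ k, d k ≤ 1 := fun k => by
    rw [hd k]; exact (hle _).trans_eq (hu1 k)
  have hd0 : ∀ k, 0 < d k := fun k => by
    have h0 : 0 ≤ d k := by
      rw [hd k]; exact Finset.sum_nonneg fun k _ => mul_self_nonneg _
    refine lt_of_le_of_ne h0 fun h => ?_
    have := hdet _ (dotProduct_self_eq_zero.mp ((hd k).symm.trans h.symm))
    have h2 := hu1 k
    rw [this] at h2
    simp at h2
  let T := U * Matrix.diagonal (fun k => (√(d k))⁻¹) * Uᵀ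
  have hT : Tᵀ = T := by
    simp only [T, Matrix.transpose_mul, Matrix.transpose_transpose, Matrix.diagonal_transpose,
      Matrix.mul_assoc]
  have hTG : T * (Aᵀ * A) = U * Matrix.diagonal (fun k => √(d k)) * Uᵀ := by
    calc T * (Aᵀ * A) = U * Matrix.diagonal (fun k => (√(d k))⁻¹) * (Uᵀ * U) *
          Matrix.diagonal d * Uᵀ := by rw [hsp]; simp only [T, Matrix.mul_assoc]
      _ = U * (Matrix.diagonal (fun k => (√(d k))⁻¹) * Matrix.diagonal d) * Uᵀ := by
          rw [hU', Matrix.mul_one]; simp only [Matrix.mul_assoc]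
      _ = _ := by
          rw [Matrix.diagonal_mul_diagonal]
          congr 3
          ext k
          have := Real.sqrt_pos.mpr (hd0 k)
          have h2 := Real.mul_self_sqrt (hd0 k).le
          field_simp
          nlinarith
  refine ⟨A * T, ?_, ?_⟩
  · calc (A * T)ᵀ * (A * T) = (T * (Aᵀ * A)) * T := by
          rw [Matrix.transpose_mul, hT]; simp only [Matrix.mul_assoc]
      _ = U * Matrix.diagonal (fun k => √(d k)) * (Uᵀ * U) *
            Matrix.diagonal (fun k => (√(d k))⁻¹) * Uᵀ := by
          rw [hTG]; simp only [T, Matrix.mul_assoc]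
      _ = U * (Matrix.diagonal (fun k => √(d k)) * Matrix.diagonal (fun k => (√(d k))⁻¹)) * Uᵀ := by
          rw [hU', Matrix.mul_one]; simp only [Matrix.mul_assoc]
      _ = 1 := by
          rw [Matrix.diagonal_mul_diagonal]
          have : (fun k => √(d k) * (√(d k))⁻¹) = fun _ => (1 : ℝ) := by
            ext k
            exact mul_inv_cancel₀ (Real.sqrt_pos.mpr (hd0 k)).ne'
          rw [this, Matrix.diagonal_one, Matrix.mul_one, hU]
  · intro i
    rw [Matrix.transpose_mul, hT, Matrix.mul_assoc, hTG, hsp]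
    rw [Matrix.mul_apply, Matrix.mul_apply]
    refine Finset.sum_le_sum fun k _ => ?_
    rw [Matrix.mul_diagonal, Matrix.mul_diagonal, Matrix.transpose_apply]
    have h1 : d k ≤ √(d k) := by
      apply Real.le_sqrt_of_sq_le
      nlinarith [hd0 k, hd1 k]
    nlinarith [mul_self_nonneg (U i k)]

/-- The comparison family built from the eigenbasis and an orthogonal matrix. -/
lemma comb_dot {n : ℕ} {p : Fin n → Prop} [DecidablePred p] (w : Fin n → (Fin n → ℝ))
    (hw : ∀ i j, w i ⬝ᵥ w j = if i = j then (1 : ℝ) else 0) (c e : {i // p i} → ℝ) :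
    (∑ k, c k • w k.1) ⬝ᵥ (∑ k, e k • w k.1) = c ⬝ᵥ e := by
  simp only [sum_dotProduct, dotProduct_sum, smul_dotProduct, dotProduct_smul, hw, smul_eq_mul]
  simp [dotProduct, Subtype.val_inj, mul_comm]

lemma main_case {n : ℕ} (M : Matrix (Fin n) (Fin n) ℝ)
    (lam : Fin n → ℝ) (s : Fin n)
    (tv w : Fin n → (Fin n → ℝ))
    (htON : ∀ i j, tv i ⬝ᵥ tv j = if i = j then (1 : ℝ) else 0)
    (hw : ∀ i j, w i ⬝ᵥ w j = if i = j then (1 : ℝ) else 0)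
    (hwe : ∀ i, M.mulVec (w i) = lam i • w i) (q : ℝ)
    (hq : ∀ i, lam i = lam s → ∑ k : {k // ¬ lam k = lam s}, (w k.1 ⬝ᵥ tv i) ^ 2 ≤ q)
    (hdq : (eigMult lam s : ℝ) * q < 1) :
    ∃ v : {i : Fin n // lam i = lam s} → (Fin n → ℝ),
      (∀ i j, v i ⬝ᵥ v j = if i = j then (1 : ℝ) else 0) ∧
      (∀ i, M.mulVec (v i) = lam s • v i) ∧
      (∀ i, 1 - q ≤ tv i.1 ⬝ᵥ v i) := by
  classical
  have split : ∀ x : Fin n → ℝ, x ⬝ᵥ x = ∑ k : {k // lam k = lam s}, (w k.1 ⬝ᵥ x) ^ 2 +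
      ∑ k : {k // ¬ lam k = lam s}, (w k.1 ⬝ᵥ x) ^ 2 := by
    intro x
    rw [on_parseval w hw x x, ← Fintype.sum_subtype_add_sum_subtype (fun k => lam k = lam s)]
    simp only [pow_two]
  let A : Matrix {i // lam i = lam s} {i // lam i = lam s} ℝ :=
    Matrix.of fun k j => w k.1 ⬝ᵥ tv j.1
  have hAc : ∀ c k, (A *ᵥ c) k = w k.1 ⬝ᵥ (∑ j, c j • tv j.1) := by
    intro c k
    simp only [dotProduct_sum, dotProduct_smul, smul_eq_mul]
    simp [A, Matrix.mulVec, dotProduct, mul_comm]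
  have hcc : ∀ c : {i // lam i = lam s} → ℝ, c ⬝ᵥ c = (A *ᵥ c) ⬝ᵥ (A *ᵥ c) +
      ∑ k : {k // ¬ lam k = lam s}, (w k.1 ⬝ᵥ (∑ j, c j • tv j.1)) ^ 2 := by
    intro c
    rw [← comb_dot (p := fun i => lam i = lam s) tv htON c c, split]
    congr 1
    refine Finset.sum_congr rfl fun k _ => ?_
    rw [hAc, pow_two]
  obtain ⟨Q, hQ, hQA⟩ := polar_aux A (by
    intro c hc
    by_contra hc0
    have hpos : 0 < c ⬝ᵥ c := by
      have h1 : c ⬝ᵥ c ≠ 0 := fun h => hc0 (dotProduct_self_eq_zero.mp h)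
      have h2 : 0 ≤ c ⬝ᵥ c := Finset.sum_nonneg fun k _ => mul_self_nonneg _
      exact lt_of_le_of_ne h2 h1.symm
    have h1 := hcc c
    rw [hc] at h1
    simp only [dotProduct_zero, zero_add] at h1
    have h2 : ∑ k : {k // ¬ lam k = lam s}, (w k.1 ⬝ᵥ (∑ j, c j • tv j.1)) ^ 2 ≤
        (c ⬝ᵥ c) * ((eigMult lam s : ℝ) * q) := by
      calc _ ≤ ∑ k : {k // ¬ lam k = lam s}, (c ⬝ᵥ c) *
              ∑ j : {j // lam j = lam s}, (w k.1 ⬝ᵥ tv j.1) ^ 2 := by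
            refine Finset.sum_le_sum fun k _ => ?_
            have := Finset.sum_mul_sq_le_sq_mul_sq Finset.univ c (fun j => w k.1 ⬝ᵥ tv j.1)
            simp only [dotProduct_sum, dotProduct_smul, smul_eq_mul]
            refine this.trans_eq ?_
            congr 1
            exact Finset.sum_congr rfl fun _ _ => pow_two _
        _ = (c ⬝ᵥ c) * ∑ j : {j // lam j = lam s}, ∑ k : {k // ¬ lam k = lam s},
              (w k.1 ⬝ᵥ tv j.1) ^ 2 := by
            rw [← Finset.mul_sum, Finset.sum_comm]
        _ ≤ (c ⬝ᵥ c) * ∑ j : {j // lam j = lam s}, q := by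
            refine mul_le_mul_of_nonneg_left ?_ hpos.le
            exact Finset.sum_le_sum fun j _ => hq j.1 j.2
        _ = _ := by
            simp [eigMult, Nat.card_eq_fintype_card]
    nlinarith) (by
    intro c
    rw [hcc c]
    have : 0 ≤ ∑ k : {k // ¬ lam k = lam s}, (w k.1 ⬝ᵥ (∑ j, c j • tv j.1)) ^ 2 :=
      Finset.sum_nonneg fun k _ => sq_nonneg _
    linarith)
  refine ⟨fun j => ∑ k, Q k j • w k.1, ?_, ?_, ?_⟩
  · intro i j
    rw [comb_dot w hw (fun k => Q k i) (fun k => Q k j)]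
    have := congrFun (congrFun hQ i) j
    rw [Matrix.one_apply] at this
    rw [← this]
    rfl
  · intro i
    rw [Matrix.mulVec_sum, Finset.smul_sum]
    refine Finset.sum_congr rfl fun k _ => ?_
    rw [Matrix.mulVec_smul, hwe, k.2, smul_comm]
  · intro i
    have h1 : tv i.1 ⬝ᵥ (∑ k, Q k i • w k.1) = (Qᵀ * A) i i := by
      simp only [dotProduct_sum, dotProduct_smul, smul_eq_mul]
      simp [A, Matrix.mul_apply, dotProduct_comm]
    have h2 : (Aᵀ * A) i i = ∑ k : {k // lam k = lam s}, (w k.1 ⬝ᵥ tv i.1) ^ 2 := by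
      simp [A, Matrix.mul_apply, pow_two]
    have h3 := split (tv i.1)
    rw [htON, if_pos rfl] at h3
    have h4 := hQA i
    have h5 := hq i.1 i.2
    change 1 - q ≤ tv i.1 ⬝ᵥ (∑ k, Q k i • w k.1)
    rw [h1]
    linarith

/-- For a fixed eigenvalue `λ_s` of `M` there is an orthonormal family of
eigenvectors of `M` for `λ_s`, indexed by `Λ_s`, aligned with the corresponding
perturbed eigenvectors: `⟨ṽ^(i), v^(i)⟩ ≥ 1 - 4 d_s (‖H‖/δ_s)²`. -/
theorem aligned_eigenspace_basis {n : ℕ} (M H : Matrix (Fin n) (Fin n) ℝ)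
    (hM : M.IsSymm) (hH : H.IsSymm)
    (lam tlam : Fin n → ℝ) (hlam : Antitone lam) (htlam : Antitone tlam)
    (tv : Fin n → (Fin n → ℝ))
    (htON : ∀ i j, tv i ⬝ᵥ tv j = if i = j then (1 : ℝ) else 0)
    (hteig : ∀ i, (M + H).mulVec (tv i) = tlam i • tv i)
    (hMspec : ∃ w : Fin n → (Fin n → ℝ),
      (∀ i j, w i ⬝ᵥ w j = if i = j then (1 : ℝ) else 0) ∧
      ∀ i, M.mulVec (w i) = lam i • w i)
    (s : Fin n) :
    ∃ v : {i : Fin n // lam i = lam s} → (Fin n → ℝ),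
      (∀ i j, v i ⬝ᵥ v j = if i = j then (1 : ℝ) else 0) ∧
      (∀ i, M.mulVec (v i) = lam s • v i) ∧
      (∀ i, 1 - 4 * (eigMult lam s) * (specNorm H / eigGap lam s) ^ 2 ≤
        tv i.1 ⬝ᵥ v i) := by
  classical
  obtain ⟨w, hw, hwe⟩ := hMspec
  by_cases hall : ∀ i, lam i = lam s
  · refine ⟨fun i => tv i.1, ?_, ?_, ?_⟩
    · intro i j
      rw [htON]
      simp [Subtype.ext_iff]
    · intro i
      have h0 : (M *ᵥ tv i.1 - lam s • tv i.1) ⬝ᵥ (M *ᵥ tv i.1 - lam s • tv i.1) = 0 := by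
        rw [on_parseval w hw]
        refine Finset.sum_eq_zero fun k _ => ?_
        have : w k ⬝ᵥ (M *ᵥ tv i.1 - lam s • tv i.1) = 0 := by
          rw [dotProduct_sub, symm_dot M hM, hwe, hall k]
          simp
        rw [this, zero_mul]
      exact sub_eq_zero.mp (dotProduct_self_eq_zero.mp h0)
    · intro i
      rw [htON, if_pos rfl]
      have : 0 ≤ 4 * (eigMult lam s : ℝ) * (specNorm H / eigGap lam s) ^ 2 := by positivity
      linarith
  push Not at hall
  obtain ⟨i₀, hi₀⟩ := hall
  have hfin : {x : ℝ | ∃ i, lam i ≠ lam s ∧ x = |lam s - lam i|}.Finite := by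
    refine (Set.finite_range fun i => |lam s - lam i|).subset ?_
    rintro x ⟨i, _, rfl⟩
    exact ⟨i, rfl⟩
  have hgap : ∀ k, lam k ≠ lam s → eigGap lam s ≤ |lam s - lam k| := fun k hk =>
    csInf_le hfin.bddBelow ⟨k, hk, rfl⟩
  have hδ : 0 < eigGap lam s := by
    obtain ⟨i, hi, he⟩ := Set.Nonempty.csInf_mem (s := {x : ℝ | ∃ i, lam i ≠ lam s ∧ x = |lam s - lam i|})
      ⟨_, i₀, hi₀, rfl⟩ hfin
    unfold eigGap
    rw [he]
    exact abs_pos.mpr (sub_ne_zero.mpr hi.symm)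
  have hd1 : (1 : ℝ) ≤ eigMult lam s := by
    have : 0 < eigMult lam s := by
      have : Nonempty {i : Fin n // lam i = lam s} := ⟨⟨s, rfl⟩⟩
      exact Nat.card_pos
    exact_mod_cast this
  have hh := specNorm_nonneg H
  set ε := specNorm H / eigGap lam s with hε
  have hε0 : 0 ≤ ε := by positivity
  by_cases hbig : 1 ≤ 4 * (eigMult lam s : ℝ) * ε ^ 2
  · refine ⟨fun i => (if 0 ≤ tv i.1 ⬝ᵥ w i.1 then (1 : ℝ) else -1) • w i.1, ?_, ?_, ?_⟩
    · intro i j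
      rw [smul_dotProduct, dotProduct_smul, hw]
      by_cases hij : i = j
      · subst hij
        rw [if_pos rfl, if_pos rfl]
        split_ifs <;> simp
      · have : i.1 ≠ j.1 := fun h => hij (Subtype.ext h)
        simp [hij, this]
    · intro i
      rw [Matrix.mulVec_smul, hwe, i.2, smul_comm]
    · intro i
      rw [dotProduct_smul, smul_eq_mul]
      split_ifs with h <;> linarith
  push Not at hbig
  have hε2 : ε < 1 / 2 := by nlinarith [sq_nonneg ε]
  have hhε : specNorm H = ε * eigGap lam s := by rw [hε]; field_simp
  have hhd : specNorm H ≤ eigGap lam s / 2 := by rw [hhε]; nlinarith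
  obtain ⟨v, h1, h2, h3⟩ := main_case M lam s tv w htON hw hwe (4 * ε ^ 2) (by
    intro i hi
    have hwl := weyl M H hM hH lam tlam hlam htlam tv w htON hteig hw hwe i
    have hres : ∀ k, (tlam i - lam k) * (w k ⬝ᵥ tv i) = w k ⬝ᵥ (H *ᵥ tv i) := by
      intro k
      have e1 : w k ⬝ᵥ ((M + H) *ᵥ tv i) = tlam i * (w k ⬝ᵥ tv i) := by
        rw [hteig, dotProduct_smul, smul_eq_mul]
      rw [Matrix.add_mulVec, dotProduct_add, symm_dot M hM, hwe, smul_dotProduct,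
        smul_eq_mul] at e1
      linarith
    have hH2 := specNorm_sq H (tv i)
    rw [htON, if_pos rfl, mul_one, on_parseval w hw,
      ← Fintype.sum_subtype_add_sum_subtype (fun k => lam k = lam s)] at hH2
    have hn : 0 ≤ ∑ k : {k // lam k = lam s},
        (w k.1 ⬝ᵥ (H *ᵥ tv i)) * (w k.1 ⬝ᵥ (H *ᵥ tv i)) :=
      Finset.sum_nonneg fun k _ => mul_self_nonneg _
    have hS : (eigGap lam s / 2) ^ 2 * ∑ k : {k // ¬ lam k = lam s}, (w k.1 ⬝ᵥ tv i) ^ 2 ≤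
        ∑ k : {k // ¬ lam k = lam s}, (w k.1 ⬝ᵥ (H *ᵥ tv i)) * (w k.1 ⬝ᵥ (H *ᵥ tv i)) := by
      rw [Finset.mul_sum]
      refine Finset.sum_le_sum fun k _ => ?_
      rw [← hres k.1]
      have hg := hgap k.1 k.2
      have ht : eigGap lam s / 2 ≤ |tlam i - lam k.1| := by
        have := abs_add_le (lam i - tlam i) (tlam i - lam k.1)
        rw [sub_add_sub_cancel, hi] at this
        rw [hi] at hwl
        linarith
      have ht2 : (eigGap lam s / 2) ^ 2 ≤ (tlam i - lam k.1) ^ 2 := by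
        rw [← sq_abs (tlam i - lam k.1)]
        exact pow_le_pow_left₀ (by positivity) ht 2
      nlinarith [mul_le_mul_of_nonneg_right ht2 (sq_nonneg (w k.1 ⬝ᵥ tv i))]
    have hfinal : (eigGap lam s / 2) ^ 2 * ∑ k : {k // ¬ lam k = lam s}, (w k.1 ⬝ᵥ tv i) ^ 2 ≤
        (eigGap lam s / 2) ^ 2 * (4 * ε ^ 2) := by
      have : specNorm H ^ 2 = (eigGap lam s / 2) ^ 2 * (4 * ε ^ 2) := by rw [hhε]; ring
      linarith
    exact le_of_mul_le_mul_left hfinal (by positivity)) (by linarith)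
  refine ⟨v, h1, h2, fun i => le_trans ?_ (h3 i)⟩
  nlinarith [sq_nonneg ε]
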